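/- Let n ≥ 3 be an odd integer and ε > 0. There exist constants c, C > 0 depending only on n and ε such that: for every real-split central division ℚ-algebra A of degree n, every order 𝒪 ⊆ A, every z ∈ GL_n(ℝ), every positive integer m, and every δ with 0 < δ ≤ c·m^{-2-ε}, the set 𝒪(m; z, δ) is finite with #𝒪(m; z, δ) ≤ C·m^ε. -/

import Mathlib

open Matrix

/-- `IsSO k` : `k ∈ SO(n)`. -/
def IsSO {n : ℕ} (k : Matrix (Fin n) (Fin n) ℝ) : Prop :=
  kᵀ * k = 1 ∧ k.det = 1

/-- An order in a `ℚ`-algebra: a subring which is finitely generated as a `ℤ`-module and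
contains a `ℚ`-basis of the algebra. -/
def IsOrder (A : Type*) [Ring A] [Algebra ℚ A] (O : Subring A) : Prop :=
  O.toAddSubgroup.FG ∧ Submodule.span ℚ (O : Set A) = ⊤

/-- The set `𝒪(m; z, δ)`. -/
noncomputable def OSet {n : ℕ} {A : Type*} [DivisionRing A] [CharZero A]
    (ι : A →ₐ[ℚ] Matrix (Fin n) (Fin n) ℝ) (O : Subring A)
    (z : Matrix.GeneralLinearGroup (Fin n) ℝ) (m : ℕ) (δ : ℝ) : Set A :=
  {γ | γ ∈ O ∧ (ι γ).det = (m : ℝ) ∧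
    ∃ k : Matrix (Fin n) (Fin n) ℝ, IsSO k ∧
      ∀ i j, |(((m : ℝ) ^ (-(1 : ℝ) / (n : ℝ))) •
        ((↑z⁻¹ : Matrix (Fin n) (Fin n) ℝ) * ι γ * (↑z : Matrix (Fin n) (Fin n) ℝ)) - k) i j| < δ}


lemma aux_indep {n : ℕ} (hn : 0 < n) {A : Type} [DivisionRing A] [CharZero A]
    (ι : A →ₐ[ℚ] Matrix (Fin n) (Fin n) ℝ)
    (hc : Subalgebra.center ℚ A = ⊥) {J : Type} (r : J → ℝ) (hr : LinearIndependent ℚ r)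
    (s : Finset J) : ∀ a : J → A, ∑ j ∈ s, r j • ι (a j) = 0 → ∀ j ∈ s, a j = 0 := by
  classical
  induction s using Finset.induction_on with
  | empty => simp
  | insert j0 s hj0 ih =>
    intro a ha
    by_cases h0 : a j0 = 0
    · rw [Finset.sum_insert hj0, h0] at ha
      simp only [map_zero, smul_zero, zero_add] at ha
      have := ih a ha
      intro j hj
      rcases Finset.mem_insert.1 hj with rfl | hj
      · exact h0
      · exact this j hj
    · exfalso
      set a' : J → A := fun j => (a j0)⁻¹ * a j with ha'
      have h1 : ∑ j ∈ insert j0 s, r j • ι (a' j) = 0 := by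
        have := congrArg (fun M => ι (a j0)⁻¹ * M) ha
        simpa [Finset.mul_sum, ha', map_mul] using this
      have h10 : a' j0 = 1 := by simp [ha', h0]
      have hcen : ∀ j ∈ insert j0 s, ∃ q : ℚ, algebraMap ℚ A q = a' j := by
        intro j hj
        rcases Finset.mem_insert.1 hj with rfl | hj
        · exact ⟨1, by simp [h10]⟩
        have hmem : a' j ∈ Subalgebra.center ℚ A := by
          rw [Subalgebra.mem_center_iff]
          intro x
          have h2 : ∑ j ∈ s, r j • ι (x * a' j - a' j * x) = 0 := by
            have e1 := congrArg (fun M => ι x * M - M * ι x) h1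
            simp only [mul_zero, zero_mul, sub_zero, Finset.mul_sum, Finset.sum_mul,
              ← Finset.sum_sub_distrib] at e1
            rw [Finset.sum_insert hj0, h10] at e1
            simpa [smul_sub] using e1
          exact sub_eq_zero.1 (ih _ h2 j hj)
        rw [hc, Algebra.mem_bot] at hmem
        exact hmem
      choose! q hq using hcen
      have h3 : ∑ j ∈ insert j0 s, q j • r j = 0 := by
        have e1 := congrFun (congrFun h1 ⟨0, hn⟩) ⟨0, hn⟩
        rw [Matrix.sum_apply] at e1
        rw [← Matrix.zero_apply (α := ℝ) (⟨0, hn⟩ : Fin n) (⟨0, hn⟩ : Fin n), ← e1]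
        refine Finset.sum_congr rfl fun j hj => ?_
        rw [← hq j hj, AlgHom.commutes]
        simp [Matrix.algebraMap_matrix_apply, Rat.smul_def, mul_comm]
      have h4 := (linearIndependent_iff'.1 hr) _ q h3 j0 (Finset.mem_insert_self _ _)
      have h5 := hq j0 (Finset.mem_insert_self _ _)
      rw [h4, h10] at h5
      simp at h5

lemma aux_indep2 {n : ℕ} (hn : 0 < n) {A : Type} [DivisionRing A] [CharZero A]
    (ι : A →ₐ[ℚ] Matrix (Fin n) (Fin n) ℝ)
    (hc : Subalgebra.center ℚ A = ⊥) {I : Type} [Fintype I] (b : I → A)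
    (hb : LinearIndependent ℚ b) : LinearIndependent ℝ (fun i => ι (b i)) := by
  classical
  rw [Fintype.linearIndependent_iff]
  intro c hsum
  let R := Module.Basis.ofVectorSpace ℚ ℝ
  let S := Finset.univ.biUnion fun i => (R.repr (c i)).support
  have hci : ∀ i, c i = ∑ j ∈ S, (R.repr (c i) j) • R j := by
    intro i
    conv_lhs => rw [← R.linearCombination_repr (c i)]
    rw [Finsupp.linearCombination_apply, Finsupp.sum_of_support_subset _ _ _ (by simp)]
    exact Finset.subset_biUnion_of_mem (fun i => (R.repr (c i)).support) (Finset.mem_univ i)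
  have key := aux_indep hn ι hc R R.linearIndependent S
    (fun j => ∑ i, R.repr (c i) j • b i) (by
      rw [← hsum]
      simp only [map_sum, Finset.smul_sum]
      rw [Finset.sum_comm]
      refine Finset.sum_congr rfl fun i _ => ?_
      conv_rhs => rw [hci i, Finset.sum_smul]
      refine Finset.sum_congr rfl fun j _ => ?_
      rw [map_smul]
      ext k l
      simp [Rat.smul_def]; ring)
  intro i
  rw [hci i]
  refine Finset.sum_eq_zero fun j hj => ?_
  rw [(Fintype.linearIndependent_iff.1 hb) _ (key j hj) i, zero_smul]

lemma aux_norm {n : ℕ} (M : Matrix (Fin n) (Fin n) ℝ) : Algebra.norm ℝ M = M.det ^ n := by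
  rw [Algebra.norm_eq_matrix_det (Matrix.stdBasis ℝ (Fin n) (Fin n))]
  have : Algebra.leftMulMatrix (Matrix.stdBasis ℝ (Fin n) (Fin n)) M =
      Matrix.kroneckerMap (· * ·) M (1 : Matrix (Fin n) (Fin n) ℝ) := by
    ext ⟨i, j⟩ ⟨k, l⟩
    rw [Algebra.leftMulMatrix_eq_repr_mul]
    have hr : ∀ N : Matrix (Fin n) (Fin n) ℝ,
        (Matrix.stdBasis ℝ (Fin n) (Fin n)).repr N (i, j) = N i j := fun N => by
      simp [Matrix.stdBasis]
    rw [hr, Matrix.stdBasis_eq_single, Matrix.kroneckerMap_apply]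
    by_cases h : l = j
    · subst h; simp
    · rw [Matrix.mul_single_apply_of_ne _ _ _ _ _ (Ne.symm h), Matrix.one_apply_ne (Ne.symm h)]; simp
  rw [this, Matrix.det_kronecker]
  simp

lemma aux_det_ge {n : ℕ} (hn : 0 < n) {A : Type} [DivisionRing A] [CharZero A]
    (ι : A →ₐ[ℚ] Matrix (Fin n) (Fin n) ℝ)
    (hc : Subalgebra.center ℚ A = ⊥) (hd : Module.finrank ℚ A = n ^ 2)
    (O : Subring A) (hO : IsOrder A O) (x : A) (hx : x ∈ O) (hx0 : x ≠ 0) :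
    1 ≤ |(ι x).det| := by
  classical
  obtain ⟨hfg, hspan⟩ := hO
  have : Module.Finite ℤ O := Module.Finite.iff_addGroup_fg.2
    ((AddGroup.fg_iff_addSubgroup_fg _).2 hfg)
  have : IsAddTorsionFree A := inferInstance
  have : IsAddTorsionFree O := inferInstance
  have : Module.Free ℤ O := inferInstance
  let I := Module.Free.ChooseBasisIndex ℤ O
  let b : Module.Basis I ℤ O := Module.Free.chooseBasis ℤ O
  let b' : I → A := fun i => (b i : A)
  have hbZ : LinearIndependent ℤ b' :=
    b.linearIndependent.map' (O.toAddSubgroup.subtype.toIntLinearMap)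
      (LinearMap.ker_eq_bot.2 Subtype.val_injective)
  have hbQ : LinearIndependent ℚ b' := (LinearIndependent.iff_fractionRing ℤ ℚ).1 hbZ
  have hsp : ⊤ ≤ Submodule.span ℚ (Set.range b') := by
    rw [← hspan, Submodule.span_le]
    intro y hy
    have := b.sum_repr ⟨y, hy⟩
    have h2 := congrArg (Subtype.val) this
    have h3 : ∑ i, (b.repr ⟨y, hy⟩ i) • b' i = y := by
      refine Eq.trans ?_ h2
      simp [b']
    rw [← h3]
    refine Submodule.sum_mem _ fun i _ => ?_
    exact zsmul_mem (Submodule.subset_span (Set.mem_range_self i)) _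
  let B : Module.Basis I ℚ A := Module.Basis.mk hbQ hsp
  have hcard : Fintype.card I = Module.finrank ℝ (Matrix (Fin n) (Fin n) ℝ) := by
    rw [← Module.finrank_eq_card_basis B, hd]
    simp [Module.finrank_matrix, sq]
  have hnI : Nonempty I := by
    rw [← Fintype.card_pos_iff, hcard]
    simp [Module.finrank_matrix, hn]
  let BR := basisOfLinearIndependentOfCardEqFinrank (aux_indep2 hn ι hc b' hbQ) hcard
  have hBR : ∀ i, BR i = ι (b' i) := fun i => by simp [BR]
  have hmat : Algebra.leftMulMatrix BR (ι x) =
      (Algebra.leftMulMatrix b ⟨x, hx⟩).map (Int.cast : ℤ → ℝ) := by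
    ext i j
    rw [Algebra.leftMulMatrix_eq_repr_mul, Matrix.map_apply, Algebra.leftMulMatrix_eq_repr_mul]
    have h2 := congrArg (Subtype.val) (b.sum_repr (⟨x, hx⟩ * b j))
    have h3 : ∑ i, (b.repr (⟨x, hx⟩ * b j) i) • b' i = x * b' j := by
      simpa [b'] using h2
    have h4 : ι x * BR j = ∑ i, ((b.repr (⟨x, hx⟩ * b j) i : ℤ) : ℝ) • BR i := by
      rw [hBR, ← map_mul, ← h3, map_sum]
      refine Finset.sum_congr rfl fun i _ => ?_
      rw [hBR, map_zsmul, Int.cast_smul_eq_zsmul]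
    rw [h4, Module.Basis.repr_sum_self]
  have hdet : (ι x).det ^ n = (((Algebra.leftMulMatrix b ⟨x, hx⟩).det : ℤ) : ℝ) := by
    rw [← aux_norm, Algebra.norm_eq_matrix_det BR, hmat, Int.cast_det]
  have hne : (ι x).det ≠ 0 := by
    have h : ι x * ι x⁻¹ = 1 := by rw [← map_mul, mul_inv_cancel₀ hx0, map_one]
    have := congrArg Matrix.det h
    rw [Matrix.det_mul, Matrix.det_one] at this
    intro h0
    simp [h0] at this
  have hge : 1 ≤ |(ι x).det| ^ n := by
    rw [← abs_pow, hdet]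
    have : (Algebra.leftMulMatrix b ⟨x, hx⟩).det ≠ 0 := by
      intro h0
      rw [h0] at hdet
      exact hne (pow_eq_zero_iff hn.ne' |>.1 (by simpa using hdet))
    exact_mod_cast Int.one_le_abs this
  by_contra hlt
  push Not at hlt
  exact absurd hge (not_le.2 (pow_lt_one₀ (abs_nonneg _) hlt hn.ne'))

lemma aux_prod {J : Type} (s : Finset J) (f g : J → ℝ) (η : ℝ) (hη : 0 ≤ η)
    (hf : ∀ j, |f j| ≤ 4) (hg : ∀ j, |g j| ≤ 4) (h : ∀ j, |f j - g j| ≤ η) :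
    |∏ j ∈ s, f j - ∏ j ∈ s, g j| ≤ s.card * 4 ^ s.card * η := by
  classical
  induction s using Finset.induction_on with
  | empty => simp
  | insert j0 s hj ih =>
    rw [Finset.prod_insert hj, Finset.prod_insert hj, Finset.card_insert_of_notMem hj]
    have e : f j0 * ∏ j ∈ s, f j - g j0 * ∏ j ∈ s, g j =
      f j0 * (∏ j ∈ s, f j - ∏ j ∈ s, g j) + (f j0 - g j0) * ∏ j ∈ s, g j := by ring
    rw [e]
    have hp : |∏ j ∈ s, g j| ≤ 4 ^ s.card := by
      rw [Finset.abs_prod]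
      exact (Finset.prod_le_prod (fun j _ => abs_nonneg _) fun j _ => hg j).trans (by simp)
    calc _ ≤ |f j0| * |∏ j ∈ s, f j - ∏ j ∈ s, g j| + |f j0 - g j0| * |∏ j ∈ s, g j| := by
          rw [← abs_mul, ← abs_mul]; exact abs_add_le _ _
      _ ≤ 4 * (s.card * 4 ^ s.card * η) + η * 4 ^ s.card := by
          gcongr
          · exact hf _
          · exact h _
      _ ≤ _ := by
          push_cast
          have : 0 ≤ η * 4 ^ s.card := by positivity
          rw [pow_succ]
          nlinarith

lemma aux_det_lip {n : ℕ} (P Q : Matrix (Fin n) (Fin n) ℝ) (η : ℝ) (hη : 0 ≤ η)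
    (hf : ∀ i j, |P i j| ≤ 4) (hg : ∀ i j, |Q i j| ≤ 4) (h : ∀ i j, |P i j - Q i j| ≤ η) :
    |P.det - Q.det| ≤ n.factorial * (n * 4 ^ n * η) := by
  rw [Matrix.det_apply', Matrix.det_apply', ← Finset.sum_sub_distrib]
  refine (Finset.abs_sum_le_sum_abs _ _).trans ?_
  refine (Finset.sum_le_card_nsmul _ _ (n * 4 ^ n * η) fun σ _ => ?_).trans ?_
  · rw [← mul_sub, abs_mul]
    have : |((Equiv.Perm.sign σ : ℤ) : ℝ)| = 1 := by
      rcases Int.units_eq_one_or (Equiv.Perm.sign σ) with h | h <;> simp [h]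
    rw [this, one_mul]
    have := aux_prod Finset.univ (fun i => P (σ i) i) (fun i => Q (σ i) i) η hη
      (fun i => hf _ _) (fun i => hg _ _) (fun i => h _ _)
    simpa using this
  · rw [Finset.card_univ, Fintype.card_perm, Fintype.card_fin, nsmul_eq_mul]

lemma aux_so_entry {n : ℕ} {k : Matrix (Fin n) (Fin n) ℝ} (hk : IsSO k) (i j : Fin n) :
    |k i j| ≤ 1 := by
  have h := congrFun (congrFun hk.1 j) j
  rw [Matrix.mul_apply, Matrix.one_apply_eq] at h
  simp only [Matrix.transpose_apply] at h
  have : k i j * k i j ≤ 1 := by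
    rw [← h]
    exact Finset.single_le_sum (f := fun i => k i j * k i j)
      (fun i _ => mul_self_nonneg _) (Finset.mem_univ i)
  exact abs_le_one_iff_mul_self_le_one.2 this

lemma aux_so_det {n : ℕ} (hodd : Odd n) {k l : Matrix (Fin n) (Fin n) ℝ} (hk : IsSO k)
    (hl : IsSO l) : (k - l).det = 0 := by
  have hl' : l * lᵀ = 1 := mul_eq_one_comm.1 hl.1
  have e : kᵀ * (k - l) * lᵀ = -(k - l)ᵀ := by
    rw [mul_sub, hk.1, sub_mul, mul_assoc, hl', Matrix.transpose_sub]; simp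
  have := congrArg Matrix.det e
  rw [Matrix.det_mul, Matrix.det_mul, Matrix.det_neg, Matrix.det_transpose, Matrix.det_transpose,
    Matrix.det_transpose, hk.2, hl.2, Fintype.card_fin, hodd.neg_one_pow] at this
  linarith

/-- For odd `n ≥ 3` and `ε > 0` there are `c, C > 0`, depending only on
`n, ε`, such that for every positive integer `m` and every `0 < δ ≤ c·m^(-2-ε)`, the set
`𝒪(m; z, δ)` is finite with `#𝒪(m; z, δ) ≤ C·m^ε`. -/
theorem stmt15 (n : ℕ) (hn : 3 ≤ n) (hodd : Odd n) (ε : ℝ) (hε : 0 < ε) :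
    ∃ c C : ℝ, 0 < c ∧ 0 < C ∧
      ∀ (A : Type) [DivisionRing A] [CharZero A]
        (ι : A →ₐ[ℚ] Matrix (Fin n) (Fin n) ℝ),
        Function.Injective ι →
        Subalgebra.center ℚ A = ⊥ →
        Module.finrank ℚ A = n ^ 2 →
        ∀ O : Subring A, IsOrder A O →
        ∀ z : Matrix.GeneralLinearGroup (Fin n) ℝ,
        ∀ m : ℕ, 1 ≤ m →
        ∀ δ : ℝ, 0 < δ → δ ≤ c * (m : ℝ) ^ (-2 - ε) →
        (OSet ι O z m δ).Finite ∧ ((OSet ι O z m δ).ncard : ℝ) ≤ C * (m : ℝ) ^ ε := by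
  classical
  have hn0 : 0 < n := by omega
  set D : ℝ := n.factorial * (n * 4 ^ n) with hD
  have hD1 : 1 ≤ D := by
    have h1 : (1 : ℝ) ≤ n.factorial := by exact_mod_cast n.factorial_pos
    have h2 : (1 : ℝ) ≤ n := by exact_mod_cast hn0
    have h3 : (1 : ℝ) ≤ 4 ^ n := one_le_pow₀ (by norm_num)
    nlinarith [mul_le_mul h2 h3 (by norm_num) (by positivity)]
  refine ⟨1 / (4 * D), 1, by positivity, one_pos, ?_⟩
  intro A _ _ ι hinj hc hd O hO z m hm δ hδ hδc
  have hm1 : (1 : ℝ) ≤ m := by exact_mod_cast hm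
  have hm0 : (0 : ℝ) < m := by linarith
  have hmd : D * (2 * δ) ≤ (m : ℝ)⁻¹ / 2 := by
    have h1 : (m : ℝ) ^ (-2 - ε) ≤ (m : ℝ)⁻¹ := by
      rw [← Real.rpow_neg_one]
      exact Real.rpow_le_rpow_of_exponent_le hm1 (by linarith)
    have h2 : δ ≤ 1 / (4 * D) * (m : ℝ)⁻¹ := hδc.trans (by gcongr)
    calc D * (2 * δ) ≤ D * (2 * (1 / (4 * D) * (m : ℝ)⁻¹)) := by gcongr
      _ = _ := by field_simp; norm_num
  have hδ1 : 2 * δ ≤ 1 := by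
    have : (m : ℝ)⁻¹ ≤ 1 := inv_le_one_of_one_le₀ hm1
    nlinarith
  have hsub : (OSet ι O z m δ).Subsingleton := by
    rintro x ⟨hxO, hxd, k, hk, hxk⟩ y ⟨hyO, hyd, l, hl, hyl⟩
    by_contra hne
    have hge := aux_det_ge hn0 ι hc hd O hO (x - y) (sub_mem hxO hyO) (sub_ne_zero.2 hne)
    set t : ℝ := (m : ℝ) ^ (-(1 : ℝ) / (n : ℝ)) with ht
    have htn : t ^ n = (m : ℝ)⁻¹ := by
      rw [ht, ← Real.rpow_natCast, ← Real.rpow_mul hm0.le, ← Real.rpow_neg_one]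
      congr 1
      field_simp
    set Z : Matrix (Fin n) (Fin n) ℝ := ↑z with hZ
    set W : Matrix (Fin n) (Fin n) ℝ := ↑z⁻¹ with hW
    have hWZ : W * Z = 1 := by
      rw [hW, hZ, ← Units.val_mul, inv_mul_cancel, Units.val_one]
    have hdWZ : W.det * Z.det = 1 := by rw [← Matrix.det_mul, hWZ, Matrix.det_one]
    set P := t • (W * ι (x - y) * Z) with hP
    have hPdet : P.det = (m : ℝ)⁻¹ * (ι (x - y)).det := by
      rw [hP, Matrix.det_smul, Fintype.card_fin, htn, Matrix.det_mul, Matrix.det_mul]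
      linear_combination (m : ℝ)⁻¹ * (ι (x - y)).det * hdWZ
    have hPk : ∀ i j, |P i j - (k - l) i j| ≤ 2 * δ := by
      intro i j
      have h1 := hxk i j
      have h2 := hyl i j
      have e : P i j - (k - l) i j =
          (t • (W * ι x * Z) - k) i j - (t • (W * ι y * Z) - l) i j := by
        rw [hP, map_sub, mul_sub, sub_mul, smul_sub]
        simp only [Matrix.sub_apply]
        ring
      rw [e]
      refine (abs_sub _ _).trans ?_
      linarith
    have hkl : ∀ i j, |(k - l) i j| ≤ 2 := by
      intro i j
      rw [Matrix.sub_apply]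
      refine (abs_sub _ _).trans ?_
      linarith [aux_so_entry hk i j, aux_so_entry hl i j]
    have hP4 : ∀ i j, |P i j| ≤ 4 := by
      intro i j
      have := abs_sub_abs_le_abs_sub (P i j) ((k - l) i j)
      linarith [hPk i j, hkl i j]
    have hlip := aux_det_lip P (k - l) (2 * δ) (by linarith) hP4
      (fun i j => (hkl i j).trans (by norm_num)) hPk
    rw [aux_so_det hodd hk hl, sub_zero, hPdet, abs_mul, abs_of_pos (inv_pos.2 hm0)] at hlip
    have hi : 0 < (m : ℝ)⁻¹ := inv_pos.2 hm0
    have : (m : ℝ)⁻¹ * |(ι (x - y)).det| ≤ (m : ℝ)⁻¹ / 2 := by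
      refine hlip.trans (le_trans (le_of_eq ?_) hmd)
      rw [hD]; ring
    nlinarith
  refine ⟨hsub.finite, ?_⟩
  have h1 : (OSet ι O z m δ).ncard ≤ 1 :=
    (Set.ncard_le_one hsub.finite).2 fun a ha b hb => hsub ha hb
  rw [one_mul]
  exact le_trans (by exact_mod_cast h1) (Real.one_le_rpow hm1 hε.le)
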